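/- arXiv:1108.3244 — 2 statements merged into one kernel-verified Lean document; each statement's English description precedes it below -/
import Mathlib

section
/- Let E > 0 and r₀ > 0. For r ∈ (0, 1/(e·r₀)) set M(r) = log(1/(r₀·r)), L(r) = log(M(r)), and h(r) = 1 − E/L(r). Then the function r ↦ r·h(r) is twice differentiable on (0, 1/(e·r₀)) with (r·h(r))'' = −(E/(L(r)²·M(r)·r))·(1 + 1/M(r) + 2/(L(r)·M(r))). In particular, whenever additionally 0 < h(r) ≤ 1, one has (r·h(r))''/(r·h(r)) ≤ −E/(2·L(r)²·M(r)·r²). -/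
/-- With `M(r) = log(1/(r₀ r))`, `L(r) = log(M(r))` and `h(r) = 1 − E / L(r)`: on
`(0, 1/(e r₀))` the function `r ↦ r h(r)` is twice differentiable with
`(r h(r))'' = −(E/(L(r)² M(r) r)) (1 + 1/M(r) + 2/(L(r) M(r)))`, and whenever
`0 < h(r) ≤ 1` one has `(r h(r))''/(r h(r)) ≤ −E/(2 L(r)² M(r) r²)`. -/
theorem stmt_9 (E r₀ : ℝ) (hE : 0 < E) (hr₀ : 0 < r₀)
    (M L h : ℝ → ℝ)
    (hM : ∀ r, M r = Real.log (1 / (r₀ * r)))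
    (hL : ∀ r, L r = Real.log (M r))
    (hh : ∀ r, h r = 1 - E / L r) :
    ∀ r ∈ Set.Ioo (0 : ℝ) (1 / (Real.exp 1 * r₀)),
      DifferentiableAt ℝ (fun x => x * h x) r ∧
        DifferentiableAt ℝ (deriv (fun x => x * h x)) r ∧
        deriv (deriv (fun x => x * h x)) r =
          -(E / ((L r) ^ 2 * M r * r)) * (1 + 1 / M r + 2 / (L r * M r)) ∧
        (0 < h r → h r ≤ 1 →
          deriv (deriv (fun x => x * h x)) r / (r * h r) ≤
            -E / (2 * (L r) ^ 2 * M r * r ^ 2)) := by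
  have hpos : ∀ r ∈ Set.Ioo (0 : ℝ) (1 / (Real.exp 1 * r₀)), 1 < M r ∧ 0 < L r := by
    intro r hr
    have h0 : 0 < r := hr.1
    have he := Real.exp_pos 1
    have h1 : r * (Real.exp 1 * r₀) < 1 := (lt_div_iff₀ (by positivity)).1 hr.2
    have h2 : 1 < M r := by
      rw [hM, Real.lt_log_iff_exp_lt (by positivity), lt_div_iff₀ (by positivity)]
      linarith
    exact ⟨h2, by rw [hL]; exact Real.log_pos h2⟩
  have hdM : ∀ r, 0 < r → HasDerivAt M (-1 / r) r := by
    intro r h0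
    have hMe : M = fun x => -Real.log (r₀ * x) := by
      funext x
      rw [hM, one_div, Real.log_inv]
    rw [hMe]
    have := ((((hasDerivAt_id r).const_mul r₀).log (by simp; exact ⟨hr₀.ne', h0.ne'⟩))).neg
    refine HasDerivAt.congr_deriv this ?_
    simp only [Pi.mul_apply, Pi.pow_apply, Pi.div_apply, id]
    norm_num
    field_simp
  have hdL : ∀ r ∈ Set.Ioo (0 : ℝ) (1 / (Real.exp 1 * r₀)), HasDerivAt L (-1 / r / M r) r := by
    intro r hr
    have hLe : L = fun x => Real.log (M x) := funext hL
    rw [hLe]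
    exact (hdM r hr.1).log (by linarith [(hpos r hr).1])
  have hd1 : ∀ r ∈ Set.Ioo (0 : ℝ) (1 / (Real.exp 1 * r₀)),
      HasDerivAt (fun x => x * h x) (1 - E / L r - E / (M r * L r ^ 2)) r := by
    intro r hr
    obtain ⟨hm, hl⟩ := hpos r hr
    have h0 : r ≠ 0 := hr.1.ne'
    have hm0 : M r ≠ 0 := by linarith
    have hhe : h = fun x => 1 - E / L x := funext hh
    rw [hhe]
    have := (hasDerivAt_id r).mul (((hasDerivAt_const r E).div (hdL r hr) hl.ne').const_sub 1)
    refine HasDerivAt.congr_deriv this ?_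
    simp only [Pi.mul_apply, Pi.pow_apply, Pi.div_apply, id]
    norm_num
    field_simp
    try ring
  have hd2 : ∀ r ∈ Set.Ioo (0 : ℝ) (1 / (Real.exp 1 * r₀)),
      HasDerivAt (deriv (fun x => x * h x))
        (-(E / ((L r) ^ 2 * M r * r)) * (1 + 1 / M r + 2 / (L r * M r))) r := by
    intro r hr
    obtain ⟨hm, hl⟩ := hpos r hr
    have h0 : r ≠ 0 := hr.1.ne'
    have hm0 : M r ≠ 0 := by linarith
    have hev : deriv (fun x => x * h x) =ᶠ[nhds r]
        fun x => 1 - E / L x - E / (M x * L x ^ 2) := by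
      filter_upwards [isOpen_Ioo.mem_nhds hr] with x hx
      exact (hd1 x hx).deriv
    refine HasDerivAt.congr_of_eventuallyEq ?_ hev
    have := (((hasDerivAt_const r E).div (hdL r hr) hl.ne').const_sub 1).sub
      ((hasDerivAt_const r E).div ((hdM r hr.1).mul ((hdL r hr).pow 2)) (by simp; exact ⟨hm0, hl.ne'⟩))
    refine HasDerivAt.congr_deriv this ?_
    simp only [Pi.mul_apply, Pi.pow_apply, Pi.div_apply, id]
    norm_num
    field_simp
    try ring
  intro r hr
  refine ⟨(hd1 r hr).differentiableAt, (hd2 r hr).differentiableAt, (hd2 r hr).deriv, ?_⟩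
  intro hh0 hh1
  rw [(hd2 r hr).deriv]
  obtain ⟨hm, hl⟩ := hpos r hr
  have h0 : 0 < r := hr.1
  have hm0 : 0 < M r := by linarith
  have hA : 0 < E / ((L r) ^ 2 * M r * r) := by positivity
  have hB : 0 < 1 / M r + 2 / (L r * M r) := by positivity
  rw [div_le_iff₀ (by positivity)]
  have e : -E / (2 * (L r) ^ 2 * M r * r ^ 2) * (r * h r)
      = -(E / ((L r) ^ 2 * M r * r)) * (h r / 2) := by
    field_simp
  rw [e]
  nlinarith [mul_pos hA hB]
end

section
/- Let D, F, E, L, M be positive real numbers satisfying E ≥ D·F, M ≥ 2, and M ≥ 2·L·D·F/E. Then for every δ ∈ [0,1], E·δ²/(L·M) − D·F·δ·√(1−δ²)/M + E·(1−δ²) ≥ 0. -/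
/-- Key algebraic inequality: if `E ≥ D F`, `M ≥ 2` and `M ≥ 2 L D F / E`, then for every
`δ ∈ [0,1]`, `E δ²/(L M) − D F δ √(1−δ²)/M + E (1−δ²) ≥ 0`. -/
theorem stmt_10 (D F E L M : ℝ) (hD : 0 < D) (hF : 0 < F) (hE : 0 < E)
    (hL : 0 < L) (hM : 0 < M)
    (h1 : D * F ≤ E) (h2 : 2 ≤ M) (h3 : 2 * L * D * F / E ≤ M) :
    ∀ δ ∈ Set.Icc (0 : ℝ) 1,
      0 ≤ E * δ ^ 2 / (L * M) - D * F * δ * Real.sqrt (1 - δ ^ 2) / M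
        + E * (1 - δ ^ 2) := by
  intro δ hδ
  obtain ⟨h0, h4⟩ := hδ
  have hs : 0 ≤ 1 - δ ^ 2 := by nlinarith
  have hsq := Real.sq_sqrt hs
  set s := Real.sqrt (1 - δ ^ 2) with hsdef
  rw [← hsq]
  have hP : 0 < D * F := mul_pos hD hF
  rw [div_le_iff₀ hE] at h3
  have hA : L * (D * F) ^ 2 ≤ 4 * E ^ 2 * M := by
    have e1 : L * (D * F) * (D * F) ≤ L * (D * F) * E :=
      mul_le_mul_of_nonneg_left h1 (by positivity)
    have e2 : 2 * L * D * F * E ≤ M * E * E := mul_le_mul_of_nonneg_right h3 hE.le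
    have e3 : 0 < M * E * E := by positivity
    nlinarith
  have hB : 0 ≤ L * s ^ 2 * (4 * E ^ 2 * M - L * (D * F) ^ 2) :=
    mul_nonneg (by positivity) (by linarith)
  have key : E * δ ^ 2 / (L * M) - D * F * δ * s / M + E * s ^ 2
      = ((2 * E * δ - L * (D * F) * s) ^ 2
        + L * s ^ 2 * (4 * E ^ 2 * M - L * (D * F) ^ 2)) / (4 * E * L * M) := by
    field_simp
    ring
  rw [key]
  positivity
end
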